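/- Let R₁,…,R_K ∈ ℂ^{m₁} be linearly independent column vectors, viewed as m₁×1 matrices, and let S₁,…,S_K be linearly independent m₂×n₂ complex matrices. Then rank(Σ_{i=1}^K Rᵢ ⊗ Sᵢᵀ) = K · rank(Σ_{i=1}^K Rᵢ ⊗ Sᵢ) if and only if there exist an integer d ≥ 1 with K·d ≤ m₂ and an invertible n₂×n₂ complex matrix Q such that for every i ∈ {1,…,K} every column of SᵢQ with index greater than d is zero, and the K·d vectors { column j of SᵢQ : 1 ≤ i ≤ K, 1 ≤ j ≤ d } are linearly independent in ℂ^{m₂}. -/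

import Mathlib

open Matrix Kronecker

/-!
Stack the `S i` vertically into `V` and horizontally into `H`. Since the `R i` are linearly
independent they admit a dual family of functionals, so `∑ R i ⊗ S i` and `V` are obtained from
each other by left multiplication and have equal rank (`rank_sum_kronecker`); in the same way
`∑ R i ⊗ (S i)ᵀ` has the rank of `Hᵀ`, that is, of `H`. Replacing every `S i` by `S i * Q` with `Q`
invertible changes neither rank, and zero columns may be discarded (`rank_eq_of_zero_cols`).

If `rank H = K * rank V`, put `d = rank V` and let the columns of `Q` with index at least `d` form
a basis of `ker V` (`exists_isUnit_zero_cols`). The remaining `K * d` columns of the new `H` span a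
space of dimension `K * d`, so they are independent. Conversely, independence of the `K * d`
columns gives `rank H = K * d`, and it forces the first `d` columns of `V` to be independent, so
`rank V = d`.
-/

/-- The matrices `T i` stacked vertically. -/
def vstack {K m n : ℕ} (T : Fin K → Matrix (Fin m) (Fin n) ℂ) :
    Matrix (Fin K × Fin m) (Fin n) ℂ :=
  Matrix.of fun p j => T p.1 p.2 j

/-- The matrices `T i` placed side by side. -/
def hstack {K m n : ℕ} (T : Fin K → Matrix (Fin m) (Fin n) ℂ) :
    Matrix (Fin m) (Fin K × Fin n) ℂ :=
  Matrix.of fun r p => T p.1 r p.2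

lemma exists_dual_family {K m₁ : ℕ} (R : Fin K → Matrix (Fin m₁) (Fin 1) ℂ)
    (hR : LinearIndependent ℂ R) :
    ∃ L : Fin K → Fin m₁ → ℂ, ∀ k i, ∑ a, L k a * R i a 0 = if k = i then 1 else 0 := by
  obtain ⟨g, hg⟩ := LinearMap.exists_leftInverse_of_injective
    (Fintype.linearCombination ℂ R) (by
      rw [LinearMap.ker_eq_bot]
      exact hR.fintypeLinearCombination_injective)
  refine ⟨fun k a => g (Matrix.single a 0 1) k, fun k i => ?_⟩
  have h1 : g (R i) = Pi.single i 1 := by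
    have := LinearMap.congr_fun hg (Pi.single i 1)
    simpa [Fintype.linearCombination_apply_single] using this
  have h2 : R i = ∑ a, R i a 0 • Matrix.single a (0 : Fin 1) (1 : ℂ) := by
    ext b c
    fin_cases c
    simp [Matrix.sum_apply, Matrix.single_apply]
  have h3 := congrFun (congrArg g h2) k
  rw [h1, map_sum] at h3
  simp only [map_smul, Finset.sum_apply, Pi.smul_apply, smul_eq_mul, Pi.single_apply] at h3
  rw [h3]
  exact Finset.sum_congr rfl fun a _ => mul_comm _ _

lemma rank_sum_kronecker {K m₁ m n : ℕ} (R : Fin K → Matrix (Fin m₁) (Fin 1) ℂ)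
    (hR : LinearIndependent ℂ R) (T : Fin K → Matrix (Fin m) (Fin n) ℂ) :
    (∑ i, R i ⊗ₖ T i).rank = (vstack T).rank := by
  obtain ⟨L, hL⟩ := exists_dual_family R hR
  set M := ∑ i, R i ⊗ₖ T i with hM
  have hMa : ∀ a b c, M (a, b) (0, c) = ∑ i, R i a 0 * T i b c := by
    intro a b c
    simp [hM, Matrix.sum_apply]
  have hN : (M.submatrix id (Equiv.uniqueProd (Fin n) (Fin 1)).symm).rank = M.rank :=
    Matrix.rank_submatrix M (Equiv.refl _) (Equiv.uniqueProd (Fin n) (Fin 1)).symm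
  rw [← hN]
  apply le_antisymm
  · have : M.submatrix id (Equiv.uniqueProd (Fin n) (Fin 1)).symm
        = ((Matrix.of fun a i => R i a 0 : Matrix (Fin m₁) (Fin K) ℂ) ⊗ₖ
            (1 : Matrix (Fin m) (Fin m) ℂ)) * vstack T := by
      ext ⟨a, b⟩ c
      have := hMa a b c
      simpa [Matrix.mul_apply, Fintype.sum_prod_type, vstack, Matrix.one_apply] using this
    rw [this]
    exact Matrix.rank_mul_le_right _ _
  · have : vstack T = ((Matrix.of L : Matrix (Fin K) (Fin m₁) ℂ) ⊗ₖ
            (1 : Matrix (Fin m) (Fin m) ℂ)) *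
          M.submatrix id (Equiv.uniqueProd (Fin n) (Fin 1)).symm := by
      ext ⟨k, b⟩ c
      have h : ∑ a, L k a * M (a, b) (0, c) = T k b c := by
        simp only [hMa, Finset.mul_sum]
        rw [Finset.sum_comm]
        simp only [← mul_assoc, ← Finset.sum_mul, hL]
        simp
      simpa [Matrix.mul_apply, Fintype.sum_prod_type, vstack, Matrix.one_apply] using h.symm
    rw [this]
    exact Matrix.rank_mul_le_right _ _

lemma rank_vstack_transpose {K m n : ℕ} (T : Fin K → Matrix (Fin m) (Fin n) ℂ) :
    (vstack fun i => (T i)ᵀ).rank = (hstack T).rank := by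
  rw [← Matrix.rank_transpose (hstack T)]
  rfl

lemma rank_vstack_mul {K m n : ℕ} (T : Fin K → Matrix (Fin m) (Fin n) ℂ)
    (Q : Matrix (Fin n) (Fin n) ℂ) (hQ : IsUnit Q) :
    (vstack fun i => T i * Q).rank = (vstack T).rank := by
  have : (vstack fun i => T i * Q) = vstack T * Q := by
    ext p j
    simp [vstack, Matrix.mul_apply]
  rw [this]
  exact Matrix.rank_mul_eq_left_of_isUnit_det _ _ ((Matrix.isUnit_iff_isUnit_det Q).mp hQ)

lemma rank_hstack_mul {K m n : ℕ} (T : Fin K → Matrix (Fin m) (Fin n) ℂ)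
    (Q : Matrix (Fin n) (Fin n) ℂ) (hQ : IsUnit Q) :
    (hstack fun i => T i * Q).rank = (hstack T).rank := by
  have : (hstack fun i => T i * Q) = hstack T * ((1 : Matrix (Fin K) (Fin K) ℂ) ⊗ₖ Q) := by
    ext r ⟨k, j⟩
    simp [hstack, Matrix.mul_apply, Fintype.sum_prod_type, Matrix.one_apply]
  rw [this]
  apply Matrix.rank_mul_eq_left_of_isUnit_det
  rw [Matrix.det_kronecker]
  simpa using ((Matrix.isUnit_iff_isUnit_det Q).mp hQ).pow _

lemma rank_eq_of_zero_cols {m n n' : Type*} [Fintype m] [Fintype n] [Fintype n']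
    (M : Matrix m n ℂ) (f : n' → n) (h : ∀ j, j ∉ Set.range f → ∀ i, M i j = 0) :
    M.rank = (M.submatrix id f).rank := by
  rw [Matrix.rank_eq_finrank_span_cols, Matrix.rank_eq_finrank_span_cols]
  suffices h' : Submodule.span ℂ (Set.range M.col) =
      Submodule.span ℂ (Set.range (M.submatrix id f).col) by rw [h']
  apply le_antisymm
  · rw [Submodule.span_le]
    rintro _ ⟨j, rfl⟩
    by_cases hj : j ∈ Set.range f
    · obtain ⟨k, rfl⟩ := hj
      exact Submodule.subset_span ⟨k, rfl⟩
    · have : M.col j = 0 := funext fun i => h j hj i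
      rw [this]
      exact Submodule.zero_mem _
  · apply Submodule.span_mono
    rintro _ ⟨k, rfl⟩
    exact ⟨f k, rfl⟩

lemma linearIndependent_col_iff_rank {m n : Type*} [Fintype m] [Fintype n] (M : Matrix m n ℂ) :
    LinearIndependent ℂ M.col ↔ M.rank = Fintype.card n := by
  rw [linearIndependent_iff_card_eq_finrank_span, Matrix.rank_eq_finrank_span_cols, eq_comm]
  rfl

/-- Invertible column operations clear every column of `V` with index at least `V.rank`: take as
columns of `Q` a basis of a complement of `ker V` followed by a basis of `ker V`. -/
lemma exists_isUnit_zero_cols {m : Type*} [Fintype m] {n : ℕ} (V : Matrix m (Fin n) ℂ) :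
    ∃ Q : Matrix (Fin n) (Fin n) ℂ, IsUnit Q ∧
      ∀ j : Fin n, V.rank ≤ (j : ℕ) → ∀ i, (V * Q) i j = 0 := by
  obtain ⟨C, hC⟩ := Submodule.exists_isCompl (LinearMap.ker V.mulVecLin)
  have hrn := LinearMap.finrank_range_add_finrank_ker V.mulVecLin
  have hcn := Submodule.finrank_add_eq_of_isCompl hC
  have hr : V.rank = Module.finrank ℂ (LinearMap.range V.mulVecLin) := rfl
  have hCr : Module.finrank ℂ C = V.rank := by omega
  have hn : V.rank + Module.finrank ℂ (LinearMap.ker V.mulVecLin) = n := by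
    simpa [hr] using hrn
  let b₀ := ((Module.finBasisOfFinrankEq ℂ C hCr).prod
    (Module.finBasis ℂ (LinearMap.ker V.mulVecLin))).map
      (Submodule.prodEquivOfIsCompl _ _ hC.symm)
  let b := b₀.reindex (finSumFinEquiv.trans (finCongr hn))
  refine ⟨(Pi.basisFun ℂ (Fin n)).toMatrix b, ?_, ?_⟩
  · have := (Pi.basisFun ℂ (Fin n)).invertibleToMatrix b
    exact isUnit_of_invertible _
  · intro j hj i
    obtain ⟨s, rfl⟩ := (finSumFinEquiv.trans (finCongr hn)).surjective j
    have hmem : b (finSumFinEquiv.trans (finCongr hn) s) ∈ LinearMap.ker V.mulVecLin := by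
      rcases s with s | s
      · exfalso
        simp at hj
        omega
      · simp [b, b₀, -LinearMap.mem_ker]
    have := congrFun (LinearMap.mem_ker.mp hmem) i
    simpa [Matrix.mul_apply, Module.Basis.toMatrix_apply, Matrix.mulVec, dotProduct] using this

theorem stmt8 (K m₁ m₂ n₂ : ℕ)
    (R : Fin K → Matrix (Fin m₁) (Fin 1) ℂ)
    (hR : LinearIndependent ℂ R)
    (S : Fin K → Matrix (Fin m₂) (Fin n₂) ℂ)
    (hS : LinearIndependent ℂ S) :
    (∑ i, R i ⊗ₖ (S i)ᵀ).rank = K * (∑ i, R i ⊗ₖ S i).rank ↔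
      ∃ d : ℕ, 1 ≤ d ∧ K * d ≤ m₂ ∧
        ∃ Q : Matrix (Fin n₂) (Fin n₂) ℂ, IsUnit Q ∧
          (∀ i : Fin K, ∀ j : Fin n₂, d ≤ (j : ℕ) → ∀ r : Fin m₂, (S i * Q) r j = 0) ∧
          LinearIndependent ℂ
            (fun p : Fin K × {j : Fin n₂ // (j : ℕ) < d} =>
              fun r : Fin m₂ => (S p.1 * Q) r p.2.1) := by
  rw [rank_sum_kronecker R hR S, rank_sum_kronecker R hR fun i => (S i)ᵀ, rank_vstack_transpose]
  rcases Nat.eq_zero_or_pos K with rfl | hK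
  · refine iff_of_true ?_ ⟨1, le_rfl, by simp, 1, isUnit_one, fun i => i.elim0,
      linearIndependent_empty_type⟩
    have := (hstack S).rank_le_card_width
    simpa using this
  have hH : ∀ (d : ℕ) (Q : Matrix (Fin n₂) (Fin n₂) ℂ), IsUnit Q →
      (∀ i : Fin K, ∀ j : Fin n₂, d ≤ (j : ℕ) → ∀ r : Fin m₂, (S i * Q) r j = 0) →
      (LinearIndependent ℂ
            (fun p : Fin K × {j : Fin n₂ // (j : ℕ) < d} =>
              fun r : Fin m₂ => (S p.1 * Q) r p.2.1) ↔
        (hstack S).rank = K * Fintype.card {j : Fin n₂ // (j : ℕ) < d}) := by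
    intro d Q hQ hz
    let f : Fin K × {j : Fin n₂ // (j : ℕ) < d} → Fin K × Fin n₂ := fun p => (p.1, p.2.1)
    rw [← rank_hstack_mul S Q hQ, rank_eq_of_zero_cols _ f]
    · have := linearIndependent_col_iff_rank ((hstack fun i => S i * Q).submatrix id f)
      rw [Fintype.card_prod, Fintype.card_fin] at this
      exact this
    · rintro ⟨i, j⟩ hj r
      refine hz i j ?_ r
      by_contra! hlt
      exact hj ⟨(i, ⟨j, hlt⟩), rfl⟩
  constructor
  · intro h
    obtain ⟨Q, hQ, hz⟩ := exists_isUnit_zero_cols (vstack S)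
    have hz' : ∀ i : Fin K, ∀ j : Fin n₂, (vstack S).rank ≤ (j : ℕ) →
        ∀ r : Fin m₂, (S i * Q) r j = 0 := by
      intro i j hj r
      simpa [vstack, Matrix.mul_apply] using hz j hj (i, r)
    refine ⟨(vstack S).rank, ?_, ?_, Q, hQ, hz', (hH _ Q hQ hz').mpr ?_⟩
    · by_contra! h0
      have h0' : vstack S = 0 := by
        rw [← LinearEquiv.map_eq_zero_iff Matrix.toLin', Matrix.toLin'_apply',
          ← LinearMap.range_eq_bot, ← Submodule.finrank_eq_zero (R := ℂ)]
        exact Nat.lt_one_iff.mp h0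
      apply hS.ne_zero ⟨0, hK⟩
      ext r j
      exact congrFun (congrFun h0' (⟨0, hK⟩, r)) j
    · rw [← h]
      simpa using (hstack S).rank_le_card_height
    · have hle : (vstack S).rank ≤ n₂ := by simpa using (vstack S).rank_le_card_width
      rw [h, Fintype.card_subtype, Fin.card_filter_val_lt, min_eq_right hle]
  · rintro ⟨d, -, -, Q, hQ, hz, hli⟩
    rw [(hH d Q hQ hz).mp hli]
    congr 1
    rw [← rank_vstack_mul S Q hQ,
      rank_eq_of_zero_cols _ (Subtype.val : {j : Fin n₂ // (j : ℕ) < d} → Fin n₂)]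
    · symm
      rw [← linearIndependent_col_iff_rank]
      -- The block of rows with index `0` already has independent columns.
      have h0 := hli.comp (fun j : {j : Fin n₂ // (j : ℕ) < d} => ((⟨0, hK⟩ : Fin K), j))
        fun _ _ h => congrArg Prod.snd h
      exact LinearIndependent.of_comp
        (LinearMap.funLeft ℂ ℂ fun r : Fin m₂ => ((⟨0, hK⟩ : Fin K), r)) h0
    · rintro j hj ⟨i, r⟩
      refine hz i j ?_ r
      by_contra! hlt
      exact hj ⟨⟨j, hlt⟩, rfl⟩
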